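/- Fix μ>0 and let Φ:(0,∞)×ℝ⁴ → ℝ⁵ be given by Φ(ρ,v) = (ρ√(1+μ²N(v)), μρv¹, μρv², μρv³, μρv⁴), whose image is ℝ^{1,4}₊ = {w∈ℝ⁵ : w⁰ > √((w¹)²+(w²)²+(w³)²+(w⁴)²)}. Then for every smooth function F on ℝ^{1,4}₊ and every (ρ,v)∈(0,∞)×ℝ⁴, writing G = F∘Φ, one has (□₍₁,₄₎F)(Φ(ρ,v)) = ∂²G/∂ρ² + (4/ρ)∂G/∂ρ − (1/(μ²ρ²))·(□G + μ²(deg(deg G) + 3·deg G)), where □ and deg act in the variable v and the ρ-derivatives are taken at (ρ,v). -/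

import Mathlib

noncomputable section

/-- `N(v) = (v¹)² + (v²)² + (v³)² + (v⁴)²` for `v ∈ ℝ⁴`. -/
def Nq (v : Fin 4 → ℝ) : ℝ := ∑ i, v i ^ 2

/-- The `i`-th standard basis vector of `ℝ⁴`. -/
def e4 (i : Fin 4) : Fin 4 → ℝ := Pi.single i 1

/-- The partial derivative `∂g/∂vⁱ` for functions on `ℝ⁴`. -/
def pd (i : Fin 4) (g : (Fin 4 → ℝ) → ℝ) (v : Fin 4 → ℝ) : ℝ := fderiv ℝ g v (e4 i)

/-- The Laplacian `□g = Σᵢ ∂²g/∂(vⁱ)²` on `ℝ⁴`. -/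
def lap (g : (Fin 4 → ℝ) → ℝ) (v : Fin 4 → ℝ) : ℝ := ∑ i, pd i (pd i g) v

/-- The degree operator `deg g = Σᵢ vⁱ ∂g/∂vⁱ` on `ℝ⁴`. -/
def degOp (g : (Fin 4 → ℝ) → ℝ) (v : Fin 4 → ℝ) : ℝ := ∑ i, v i * pd i g v

/-- The `j`-th standard basis vector of `ℝ⁵`. -/
def e5 (j : Fin 5) : Fin 5 → ℝ := Pi.single j 1

/-- The partial derivative `∂F/∂wʲ` for functions on `ℝ⁵`. -/
def pd5 (j : Fin 5) (F : (Fin 5 → ℝ) → ℝ) (w : Fin 5 → ℝ) : ℝ := fderiv ℝ F w (e5 j)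

/-- The wave operator `□₍₁,₄₎ = ∂²/∂(w⁰)² − Σᵢ ∂²/∂(wⁱ)²` on `ℝ⁵`. -/
def box14 (F : (Fin 5 → ℝ) → ℝ) (w : Fin 5 → ℝ) : ℝ :=
  pd5 0 (pd5 0 F) w - ∑ i : Fin 4, pd5 i.succ (pd5 i.succ F) w

/-- The region `ℝ^{1,4}₊ = {w : w⁰ > √((w¹)²+(w²)²+(w³)²+(w⁴)²)}`. -/
def upperRegion : Set (Fin 5 → ℝ) :=
  {w | Real.sqrt (w 1 ^ 2 + w 2 ^ 2 + w 3 ^ 2 + w 4 ^ 2) < w 0}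

/-- The hyperbolic coordinate map `Φ(ρ,v) = (ρ√(1+μ²N(v)), μρv¹, μρv², μρv³, μρv⁴)`. -/
def Phi (μ ρ : ℝ) (v : Fin 4 → ℝ) : Fin 5 → ℝ :=
  Fin.cons (ρ * Real.sqrt (1 + μ ^ 2 * Nq v)) (fun i => μ * ρ * v i)

/-!
Every second-order term in the identity is a second derivative along a curve, and
`(F ∘ γ)'' = D²F(γ', γ') + DF(γ'')`. The rays `r ↦ Φ(r, v)` have no acceleration, and `Φ(ρ, ·)`
maps the lines `t ↦ v + t x` to curves whose acceleration is a multiple of the time axis.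
Since `deg (deg G) + (n - 1) deg G = D²G(v, v) + n DG(v)`, adding up the contributions of the
coordinate directions and of `x = v` leaves, up to the factor `μ²ρ²`, the second radial derivative
of `F` minus its wave operator, plus `n / ρ` times the first radial derivative.
-/

open Filter Topology

section SecondDerivative

variable {E G : Type*} [NormedAddCommGroup E] [NormedSpace ℝ E]
  [NormedAddCommGroup G] [NormedSpace ℝ G] {f : E → G}

lemma differentiableAt_fderiv_of_contDiffAt_two {x : E} (hf : ContDiffAt ℝ 2 f x) :
    DifferentiableAt ℝ (fderiv ℝ f) x :=
  (hf.fderiv_right (m := 1) (by norm_num)).differentiableAt one_ne_zero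

lemma eventually_differentiableAt_of_contDiffAt_two {x : E} (hf : ContDiffAt ℝ 2 f x) :
    ∀ᶠ y in 𝓝 x, DifferentiableAt ℝ f y :=
  (hf.eventually (by simp)).mono fun _ hy => hy.differentiableAt two_ne_zero

lemma deriv_deriv_comp_eq_fderiv_fderiv_add {γ vel : ℝ → E} {acc : E} {t : ℝ}
    (hf : ContDiffAt ℝ 2 f (γ t)) (hγ : ∀ᶠ s in 𝓝 t, HasDerivAt γ (vel s) s)
    (hvel : HasDerivAt vel acc t) :
    deriv (deriv fun s => f (γ s)) t =
      fderiv ℝ (fderiv ℝ f) (γ t) (vel t) (vel t) + fderiv ℝ f (γ t) acc := by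
  have hderiv : deriv (fun s => f (γ s)) =ᶠ[𝓝 t] fun s => fderiv ℝ f (γ s) (vel s) := by
    have hdiff := hγ.self_of_nhds.continuousAt.eventually
      (eventually_differentiableAt_of_contDiffAt_two hf)
    filter_upwards [hγ, hdiff] with s hγs hfs
    exact (hfs.hasFDerivAt.comp_hasDerivAt s hγs).deriv
  have hdf : HasDerivAt (fun s => fderiv ℝ f (γ s)) (fderiv ℝ (fderiv ℝ f) (γ t) (vel t)) t :=
    (differentiableAt_fderiv_of_contDiffAt_two hf).hasFDerivAt.comp_hasDerivAt t hγ.self_of_nhds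
  rw [hderiv.deriv_eq]
  exact (hdf.clm_apply hvel).deriv

lemma fderiv_fderiv_apply_self_eq_deriv_deriv {x : E} (hf : ContDiffAt ℝ 2 f x) (y : E) :
    fderiv ℝ (fderiv ℝ f) x y y = deriv (deriv fun t : ℝ => f (x + t • y)) 0 := by
  have hline (t : ℝ) : HasDerivAt (fun t : ℝ => x + t • y) y t := by
    simpa using ((hasDerivAt_id t).smul_const y).const_add x
  rw [deriv_deriv_comp_eq_fderiv_fderiv_add (vel := fun _ => y) (by simpa using hf)
    (Eventually.of_forall hline) (hasDerivAt_const 0 y)]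
  simp

end SecondDerivative

section CoordinateOperators

variable {ι : Type*} [Fintype ι] [DecidableEq ι]

lemma sum_smul_single_one (v : ι → ℝ) : ∑ i, v i • (Pi.single i 1 : ι → ℝ) = v := by
  simpa [Pi.single_apply] using (pi_eq_sum_univ' v).symm

/-- The `i`-th partial derivative of a function on `ℝ^ι`. -/
def partialDeriv (i : ι) (g : (ι → ℝ) → ℝ) (v : ι → ℝ) : ℝ := fderiv ℝ g v (Pi.single i 1)

/-- The Laplacian `∑ᵢ ∂ᵢ∂ᵢ` on `ℝ^ι`, for the standard Euclidean structure. -/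
def coordLaplacian (g : (ι → ℝ) → ℝ) (v : ι → ℝ) : ℝ := ∑ i, partialDeriv i (partialDeriv i g) v

/-- The Euler (degree) operator `∑ᵢ vⁱ ∂ᵢ` on `ℝ^ι`. -/
def eulerOp (g : (ι → ℝ) → ℝ) (v : ι → ℝ) : ℝ := ∑ i, v i * partialDeriv i g v

/-- The wave operator `∂₀∂₀ - ∑ᵢ ∂ᵢ∂ᵢ` on Minkowski space `ℝ^{1,n}`, with time coordinate `0`. -/
def waveOp {n : ℕ} (F : (Fin (n + 1) → ℝ) → ℝ) (w : Fin (n + 1) → ℝ) : ℝ :=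
  partialDeriv 0 (partialDeriv 0 F) w - ∑ i : Fin n, partialDeriv i.succ (partialDeriv i.succ F) w

variable {g : (ι → ℝ) → ℝ} {v : ι → ℝ}

lemma partialDeriv_partialDeriv (hg : ContDiffAt ℝ 2 g v) (i j : ι) :
    partialDeriv i (partialDeriv j g) v =
      fderiv ℝ (fderiv ℝ g) v (Pi.single i 1) (Pi.single j 1) := by
  unfold partialDeriv
  rw [fderiv_clm_apply (differentiableAt_fderiv_of_contDiffAt_two hg) (differentiableAt_const _)]
  simp

lemma coordLaplacian_eq_sum_fderiv_fderiv (hg : ContDiffAt ℝ 2 g v) :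
    coordLaplacian g v = ∑ i, fderiv ℝ (fderiv ℝ g) v (Pi.single i 1) (Pi.single i 1) :=
  Finset.sum_congr rfl fun i _ => partialDeriv_partialDeriv hg i i

lemma eulerOp_eq_fderiv (g : (ι → ℝ) → ℝ) : eulerOp g = fun v => fderiv ℝ g v v := by
  funext v
  conv_rhs => rw [← congrArg (fderiv ℝ g v) (sum_smul_single_one v), map_sum]
  simp only [eulerOp, partialDeriv, map_smul, smul_eq_mul]

lemma eulerOp_eulerOp (hg : ContDiffAt ℝ 2 g v) :
    eulerOp (eulerOp g) v = fderiv ℝ (fderiv ℝ g) v v v + fderiv ℝ g v v := by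
  simp only [eulerOp_eq_fderiv]
  rw [fderiv_clm_apply (differentiableAt_fderiv_of_contDiffAt_two hg) differentiableAt_fun_id]
  simp [add_comm]

end CoordinateOperators

section LorentzFactor

variable {ι : Type*} [Fintype ι]

/-- The factor `√(1 + μ²|v|²)`, with `|v|²` the Euclidean square `v ⬝ᵥ v`: the time coordinate of
the point of the unit hyperboloid with spatial part `μ v`. -/
def lorentzFactor (μ : ℝ) (v : ι → ℝ) : ℝ := √(1 + μ ^ 2 * (v ⬝ᵥ v))

lemma sum_sq_eq_dotProduct_self (v : ι → ℝ) : ∑ i, v i ^ 2 = v ⬝ᵥ v := by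
  simp only [dotProduct, sq]

lemma one_add_sq_mul_dotProduct_self_pos (μ : ℝ) (v : ι → ℝ) : 0 < 1 + μ ^ 2 * (v ⬝ᵥ v) := by
  have : 0 ≤ v ⬝ᵥ v := by simpa using dotProduct_star_self_nonneg v
  positivity

lemma lorentzFactor_pos (μ : ℝ) (v : ι → ℝ) : 0 < lorentzFactor μ v :=
  Real.sqrt_pos.2 (one_add_sq_mul_dotProduct_self_pos μ v)

lemma lorentzFactor_sq (μ : ℝ) (v : ι → ℝ) : lorentzFactor μ v ^ 2 = 1 + μ ^ 2 * (v ⬝ᵥ v) :=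
  Real.sq_sqrt (one_add_sq_mul_dotProduct_self_pos μ v).le

lemma sq_mul_dotProduct_self (μ : ℝ) (v : ι → ℝ) :
    μ ^ 2 * (v ⬝ᵥ v) = lorentzFactor μ v ^ 2 - 1 := by
  rw [lorentzFactor_sq, add_sub_cancel_left]

lemma contDiff_lorentzFactor (μ : ℝ) {k : WithTop ℕ∞} :
    ContDiff ℝ k (lorentzFactor μ : (ι → ℝ) → ℝ) := by
  refine ContDiff.sqrt ?_ fun v => (one_add_sq_mul_dotProduct_self_pos μ v).ne'
  unfold dotProduct
  fun_prop

variable (μ : ℝ) (v x : ι → ℝ) (t : ℝ)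

lemma hasDerivAt_line_dotProduct (y : ι → ℝ) :
    HasDerivAt (fun t : ℝ => (v + t • x) ⬝ᵥ y) (x ⬝ᵥ y) t := by
  simp only [add_dotProduct, smul_dotProduct, smul_eq_mul]
  simpa using ((hasDerivAt_id t).mul_const (x ⬝ᵥ y)).const_add (v ⬝ᵥ y)

lemma hasDerivAt_line_dotProduct_self :
    HasDerivAt (fun t : ℝ => (v + t • x) ⬝ᵥ (v + t • x)) (2 * ((v + t • x) ⬝ᵥ x)) t := by
  have expand (t : ℝ) : (v + t • x) ⬝ᵥ (v + t • x) =
      (v + t • x) ⬝ᵥ v + t * ((v + t • x) ⬝ᵥ x) := by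
    simp only [dotProduct_add, dotProduct_smul, smul_eq_mul]
  simp only [expand]
  refine ((hasDerivAt_line_dotProduct v x t v).fun_add
    ((hasDerivAt_id' t).fun_mul (hasDerivAt_line_dotProduct v x t x))).congr_deriv ?_
  simp only [add_dotProduct, smul_dotProduct, smul_eq_mul, dotProduct_comm x v]
  ring

lemma hasDerivAt_lorentzFactor_line :
    HasDerivAt (fun t : ℝ => lorentzFactor μ (v + t • x))
      (μ ^ 2 * ((v + t • x) ⬝ᵥ x) / lorentzFactor μ (v + t • x)) t := by
  refine ((((hasDerivAt_line_dotProduct_self v x t).const_mul (μ ^ 2)).const_add 1).sqrt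
    (one_add_sq_mul_dotProduct_self_pos μ (v + t • x)).ne').congr_deriv ?_
  rw [mul_left_comm, mul_div_mul_left _ _ two_ne_zero, lorentzFactor]

lemma hasDerivAt_deriv_lorentzFactor_line :
    HasDerivAt (fun t : ℝ => μ ^ 2 * ((v + t • x) ⬝ᵥ x) / lorentzFactor μ (v + t • x))
      (μ ^ 2 * (x ⬝ᵥ x) / lorentzFactor μ (v + t • x)
        - (μ ^ 2 * ((v + t • x) ⬝ᵥ x)) ^ 2 / lorentzFactor μ (v + t • x) ^ 3) t := by
  have hpos := lorentzFactor_pos μ (v + t • x)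
  refine (((hasDerivAt_line_dotProduct v x t x).const_mul (μ ^ 2)).fun_div
    (hasDerivAt_lorentzFactor_line μ v x t) hpos.ne').congr_deriv ?_
  field_simp

end LorentzFactor

section BilinearForm

variable {W : Type*} [NormedAddCommGroup W] [NormedSpace ℝ W] (B : W →L[ℝ] W →L[ℝ] ℝ)

lemma bilinForm_apply_smul_add_smul_self (a b : ℝ) (x y : W) :
    B (a • x + b • y) (a • x + b • y) =
      a ^ 2 * B x x + a * b * (B x y + B y x) + b ^ 2 * B y y := by
  simp only [map_add, map_smul, add_apply, smul_apply, smul_eq_mul]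
  ring

lemma sum_bilinForm_apply_smul_add_smul_self {ι : Type*} [Fintype ι] (a b : ℝ) (v : ι → ℝ)
    (x : W) (y : ι → W) :
    ∑ i, B ((a * v i) • x + b • y i) ((a * v i) • x + b • y i) =
      a ^ 2 * (v ⬝ᵥ v) * B x x + a * b * (B x (∑ i, v i • y i) + B (∑ i, v i • y i) x)
        + b ^ 2 * ∑ i, B (y i) (y i) := by
  simp only [bilinForm_apply_smul_add_smul_self, map_sum, map_smul, sum_apply, smul_apply,
    smul_eq_mul, dotProduct, Finset.mul_sum, Finset.sum_mul, ← Finset.sum_add_distrib]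
  exact Finset.sum_congr rfl fun i _ => by ring

end BilinearForm

section HyperbolicMap

variable {n : ℕ}

/-- The inclusion `x ↦ (0, x)` of space into Minkowski space `ℝ^{1,n}`. -/
def spatial : (Fin n → ℝ) →L[ℝ] (Fin (n + 1) → ℝ) :=
  ContinuousLinearMap.pi (Fin.cons 0 ContinuousLinearMap.proj)

/-- The unit time vector `(1, 0)` of Minkowski space `ℝ^{1,n}`. -/
def timeAxis : Fin (n + 1) → ℝ := Pi.single 0 1

/-- Hyperbolic coordinates `Φ(ρ, v) = (ρ √(1 + μ²|v|²), μ ρ v)` on `ℝ^{1,n}`, written as a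
combination of `timeAxis` and a spatial vector so that `Φ` can be differentiated in that form. -/
def hyperbolicMap (μ ρ : ℝ) (v : Fin n → ℝ) : Fin (n + 1) → ℝ :=
  (ρ * lorentzFactor μ v) • timeAxis + (μ * ρ) • spatial v

@[simp] lemma spatial_apply_zero (x : Fin n → ℝ) : spatial x 0 = 0 := rfl

@[simp] lemma spatial_apply_succ (x : Fin n → ℝ) (i : Fin n) : spatial x i.succ = x i := rfl

lemma spatial_single (i : Fin n) : spatial (Pi.single i 1) = Pi.single i.succ 1 := by
  ext k
  cases k using Fin.cases <;> simp [Pi.single_apply]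

lemma sum_smul_spatial_single (v : Fin n → ℝ) :
    ∑ i, v i • spatial (Pi.single i 1) = spatial v := by
  simp only [← map_smul, ← map_sum, sum_smul_single_one]

lemma contDiff_hyperbolicMap (μ ρ : ℝ) {k : WithTop ℕ∞} :
    ContDiff ℝ k (hyperbolicMap μ ρ : (Fin n → ℝ) → Fin (n + 1) → ℝ) :=
  ((contDiff_const.mul (contDiff_lorentzFactor μ)).smul contDiff_const).add
    (spatial.contDiff.const_smul _)

lemma waveOp_eq_fderiv_fderiv {F : (Fin (n + 1) → ℝ) → ℝ} {w : Fin (n + 1) → ℝ}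
    (hF : ContDiffAt ℝ 2 F w) :
    waveOp F w = fderiv ℝ (fderiv ℝ F) w timeAxis timeAxis
      - ∑ i : Fin n, fderiv ℝ (fderiv ℝ F) w (spatial (Pi.single i 1))
          (spatial (Pi.single i 1)) := by
  simp only [waveOp, partialDeriv_partialDeriv hF, spatial_single, timeAxis]

lemma hasDerivAt_hyperbolicMap_radial (μ ρ : ℝ) (v : Fin n → ℝ) :
    HasDerivAt (fun r => hyperbolicMap μ r v)
      (lorentzFactor μ v • timeAxis + μ • spatial v) ρ := by
  unfold hyperbolicMap
  simpa using (((hasDerivAt_id ρ).mul_const _).smul_const timeAxis).fun_add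
    (((hasDerivAt_id ρ).const_mul μ).smul_const (spatial v))

lemma hasDerivAt_hyperbolicMap_line (μ ρ : ℝ) (v x : Fin n → ℝ) (t : ℝ) :
    HasDerivAt (fun t : ℝ => hyperbolicMap μ ρ (v + t • x))
      ((ρ * (μ ^ 2 * ((v + t • x) ⬝ᵥ x) / lorentzFactor μ (v + t • x))) • timeAxis
        + (μ * ρ) • spatial x) t := by
  have hspatial : HasDerivAt (fun t : ℝ => spatial (v + t • x)) (spatial x) t := by
    simp only [map_add, map_smul]
    simpa using ((hasDerivAt_id t).smul_const (spatial x)).const_add (spatial v)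
  exact (((hasDerivAt_lorentzFactor_line μ v x t).const_mul ρ).smul_const timeAxis).fun_add
    (hspatial.const_smul (μ * ρ))

end HyperbolicMap

section Pullback

variable {n : ℕ} {F : (Fin (n + 1) → ℝ) → ℝ} {μ ρ : ℝ} {v : Fin n → ℝ}

lemma contDiffAt_comp_hyperbolicMap {k : WithTop ℕ∞}
    (hF : ContDiffAt ℝ k F (hyperbolicMap μ ρ v)) :
    ContDiffAt ℝ k (fun u => F (hyperbolicMap μ ρ u)) v :=
  hF.comp v (contDiff_hyperbolicMap μ ρ).contDiffAt

lemma deriv_comp_hyperbolicMap (hF : DifferentiableAt ℝ F (hyperbolicMap μ ρ v)) :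
    deriv (fun r => F (hyperbolicMap μ r v)) ρ =
      fderiv ℝ F (hyperbolicMap μ ρ v) (lorentzFactor μ v • timeAxis + μ • spatial v) :=
  (hF.hasFDerivAt.comp_hasDerivAt ρ (hasDerivAt_hyperbolicMap_radial μ ρ v)).deriv

lemma deriv_deriv_comp_hyperbolicMap (hF : ContDiffAt ℝ 2 F (hyperbolicMap μ ρ v)) :
    deriv (deriv fun r => F (hyperbolicMap μ r v)) ρ =
      fderiv ℝ (fderiv ℝ F) (hyperbolicMap μ ρ v)
        (lorentzFactor μ v • timeAxis + μ • spatial v)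
        (lorentzFactor μ v • timeAxis + μ • spatial v) := by
  rw [deriv_deriv_comp_eq_fderiv_fderiv_add hF
    (Eventually.of_forall fun r => hasDerivAt_hyperbolicMap_radial μ r v)
    (hasDerivAt_const ρ _), map_zero, add_zero]

lemma fderiv_comp_hyperbolicMap (hF : DifferentiableAt ℝ F (hyperbolicMap μ ρ v))
    (x : Fin n → ℝ) :
    fderiv ℝ (fun u => F (hyperbolicMap μ ρ u)) v x =
      fderiv ℝ F (hyperbolicMap μ ρ v)
        ((ρ * (μ ^ 2 * (v ⬝ᵥ x) / lorentzFactor μ v)) • timeAxis + (μ * ρ) • spatial x) := by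
  have hG : DifferentiableAt ℝ (fun u => F (hyperbolicMap μ ρ u)) v :=
    hF.comp v ((contDiff_hyperbolicMap μ ρ).differentiable one_ne_zero v)
  have hline := hasDerivAt_hyperbolicMap_line μ ρ v x 0
  rw [← hG.lineDeriv_eq_fderiv, lineDeriv]
  rw [zero_smul, add_zero] at hline
  exact (hF.hasFDerivAt.comp_hasDerivAt_of_eq 0 hline (by simp)).deriv

lemma fderiv_fderiv_comp_hyperbolicMap (hF : ContDiffAt ℝ 2 F (hyperbolicMap μ ρ v))
    (x : Fin n → ℝ) :
    fderiv ℝ (fderiv ℝ fun u => F (hyperbolicMap μ ρ u)) v x x =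
      fderiv ℝ (fderiv ℝ F) (hyperbolicMap μ ρ v)
        ((ρ * (μ ^ 2 * (v ⬝ᵥ x) / lorentzFactor μ v)) • timeAxis + (μ * ρ) • spatial x)
        ((ρ * (μ ^ 2 * (v ⬝ᵥ x) / lorentzFactor μ v)) • timeAxis + (μ * ρ) • spatial x)
      + ρ * (μ ^ 2 * (x ⬝ᵥ x) / lorentzFactor μ v
          - (μ ^ 2 * (v ⬝ᵥ x)) ^ 2 / lorentzFactor μ v ^ 3)
        * fderiv ℝ F (hyperbolicMap μ ρ v) timeAxis := by
  have hG := contDiffAt_comp_hyperbolicMap hF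
  have acceleration := (((hasDerivAt_deriv_lorentzFactor_line μ v x 0).const_mul ρ).smul_const
    (timeAxis : Fin (n + 1) → ℝ)).add_const ((μ * ρ) • spatial x)
  rw [fderiv_fderiv_apply_self_eq_deriv_deriv hG,
    deriv_deriv_comp_eq_fderiv_fderiv_add (by simpa using hF)
      (Eventually.of_forall (hasDerivAt_hyperbolicMap_line μ ρ v x)) acceleration]
  simp only [zero_smul, add_zero, map_smul, smul_eq_mul]

lemma coordLaplacian_comp_hyperbolicMap (hF : ContDiffAt ℝ 2 F (hyperbolicMap μ ρ v)) :
    coordLaplacian (fun u => F (hyperbolicMap μ ρ u)) v =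
      (μ * ρ) ^ 2 * (μ ^ 2 * (v ⬝ᵥ v) / lorentzFactor μ v ^ 2
          * fderiv ℝ (fderiv ℝ F) (hyperbolicMap μ ρ v) timeAxis timeAxis
        + μ / lorentzFactor μ v
          * (fderiv ℝ (fderiv ℝ F) (hyperbolicMap μ ρ v) timeAxis (spatial v)
            + fderiv ℝ (fderiv ℝ F) (hyperbolicMap μ ρ v) (spatial v) timeAxis)
        + ∑ i, fderiv ℝ (fderiv ℝ F) (hyperbolicMap μ ρ v) (spatial (Pi.single i 1))
          (spatial (Pi.single i 1)))
      + μ ^ 2 * ρ * (n / lorentzFactor μ v - μ ^ 2 * (v ⬝ᵥ v) / lorentzFactor μ v ^ 3)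
        * fderiv ℝ F (hyperbolicMap μ ρ v) timeAxis := by
  have hG := contDiffAt_comp_hyperbolicMap hF
  have velocity (i : Fin n) : ρ * (μ ^ 2 * (v ⬝ᵥ Pi.single i 1) / lorentzFactor μ v) =
      ρ * μ ^ 2 / lorentzFactor μ v * v i := by
    rw [dotProduct_single_one]
    ring
  have acceleration : ∑ i : Fin n, (μ ^ 2 * (Pi.single i 1 ⬝ᵥ Pi.single i 1) / lorentzFactor μ v
        - (μ ^ 2 * (v ⬝ᵥ Pi.single i 1)) ^ 2 / lorentzFactor μ v ^ 3) =
      μ ^ 2 * (n / lorentzFactor μ v - μ ^ 2 * (v ⬝ᵥ v) / lorentzFactor μ v ^ 3) := by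
    simp only [dotProduct_single_one, Pi.single_eq_same, Finset.sum_sub_distrib, Finset.sum_const,
      Finset.card_univ, Fintype.card_fin, nsmul_eq_mul, mul_pow, ← Finset.sum_div,
      ← Finset.mul_sum, sum_sq_eq_dotProduct_self]
    ring
  simp only [coordLaplacian_eq_sum_fderiv_fderiv hG, fderiv_fderiv_comp_hyperbolicMap hF,
    Finset.sum_add_distrib, ← Finset.sum_mul, ← Finset.mul_sum, acceleration, velocity,
    sum_bilinForm_apply_smul_add_smul_self, sum_smul_spatial_single]
  ring

theorem coordLaplacian_add_eulerOp_comp_hyperbolicMap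
    (hF : ContDiffAt ℝ 2 F (hyperbolicMap μ ρ v)) :
    coordLaplacian (fun u => F (hyperbolicMap μ ρ u)) v
      + μ ^ 2 * (eulerOp (eulerOp fun u => F (hyperbolicMap μ ρ u)) v
          + (n - 1) * eulerOp (fun u => F (hyperbolicMap μ ρ u)) v) =
      μ ^ 2 * (ρ ^ 2 * (deriv (deriv fun r => F (hyperbolicMap μ r v)) ρ
          - waveOp F (hyperbolicMap μ ρ v))
        + n * ρ * deriv (fun r => F (hyperbolicMap μ r v)) ρ) := by
  have hG := contDiffAt_comp_hyperbolicMap hF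
  have hdF := hF.differentiableAt two_ne_zero
  have hpos := lorentzFactor_pos μ v
  rw [coordLaplacian_comp_hyperbolicMap hF, eulerOp_eulerOp hG,
    congrFun (eulerOp_eq_fderiv _) v, fderiv_fderiv_comp_hyperbolicMap hF,
    fderiv_comp_hyperbolicMap hdF,
    deriv_deriv_comp_hyperbolicMap hF, deriv_comp_hyperbolicMap hdF, waveOp_eq_fderiv_fderiv hF]
  simp only [sq_mul_dotProduct_self, bilinForm_apply_smul_add_smul_self]
  simp only [map_add, map_smul, smul_eq_mul]
  field_simp
  ring

end Pullback

theorem stmt2_general {n : ℕ} {μ ρ : ℝ} (hμ : μ ≠ 0) (hρ : ρ ≠ 0) {v : Fin n → ℝ}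
    {F : (Fin (n + 1) → ℝ) → ℝ} (hF : ContDiffAt ℝ 2 F (hyperbolicMap μ ρ v)) :
    waveOp F (hyperbolicMap μ ρ v) =
      deriv (deriv fun r => F (hyperbolicMap μ r v)) ρ
      + (n / ρ) * deriv (fun r => F (hyperbolicMap μ r v)) ρ
      - (1 / (μ ^ 2 * ρ ^ 2)) *
          (coordLaplacian (fun u => F (hyperbolicMap μ ρ u)) v
            + μ ^ 2 * (eulerOp (eulerOp fun u => F (hyperbolicMap μ ρ u)) v
                        + (n - 1) * eulerOp (fun u => F (hyperbolicMap μ ρ u)) v)) := by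
  rw [coordLaplacian_add_eulerOp_comp_hyperbolicMap hF]
  field_simp
  ring

lemma Nq_eq_dotProduct_self (v : Fin 4 → ℝ) : Nq v = v ⬝ᵥ v := sum_sq_eq_dotProduct_self v

lemma Phi_eq_hyperbolicMap : Phi = hyperbolicMap (n := 4) := by
  funext μ ρ v k
  cases k using Fin.cases <;>
    simp [Phi, hyperbolicMap, timeAxis, lorentzFactor, Nq_eq_dotProduct_self]

lemma isOpen_upperRegion : IsOpen upperRegion :=
  isOpen_lt (by fun_prop) (by fun_prop)

lemma Phi_mem_upperRegion (μ : ℝ) {ρ : ℝ} (hρ : 0 < ρ) (v : Fin 4 → ℝ) :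
    Phi μ ρ v ∈ upperRegion := by
  have hpos : 0 < 1 + μ ^ 2 * Nq v := by
    rw [Nq_eq_dotProduct_self]
    exact one_add_sq_mul_dotProduct_self_pos μ v
  have spatial_norm : (μ * ρ * v 0) ^ 2 + (μ * ρ * v 1) ^ 2 + (μ * ρ * v 2) ^ 2
      + (μ * ρ * v 3) ^ 2 = ρ ^ 2 * (μ ^ 2 * Nq v) := by
    rw [Nq, Fin.sum_univ_four]
    ring
  change √((μ * ρ * v 0) ^ 2 + (μ * ρ * v 1) ^ 2 + (μ * ρ * v 2) ^ 2 + (μ * ρ * v 3) ^ 2)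
    < ρ * √(1 + μ ^ 2 * Nq v)
  rw [spatial_norm, Real.sqrt_lt' (by positivity), mul_pow, Real.sq_sqrt hpos.le]
  gcongr
  exact lt_one_add _

lemma contDiffAt_Phi_of_contDiffOn_upperRegion {F : (Fin 5 → ℝ) → ℝ} {k : WithTop ℕ∞} {μ ρ : ℝ}
    (hF : ContDiffOn ℝ k F upperRegion) (hρ : 0 < ρ) (v : Fin 4 → ℝ) :
    ContDiffAt ℝ k F (Phi μ ρ v) :=
  hF.contDiffAt (isOpen_upperRegion.mem_nhds (Phi_mem_upperRegion μ hρ v))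

lemma lap_eq_coordLaplacian : lap = coordLaplacian := rfl

lemma degOp_eq_eulerOp : degOp = eulerOp := rfl

lemma box14_eq_waveOp : box14 = waveOp := rfl

/-- For every smooth `F` on `ℝ^{1,4}₊` and every `(ρ,v) ∈ (0,∞)×ℝ⁴`, with `G = F∘Φ`:
`(□₍₁,₄₎F)(Φ(ρ,v)) = ∂²G/∂ρ² + (4/ρ)∂G/∂ρ − (1/(μ²ρ²))·(□G + μ²(deg(deg G) + 3·deg G))`,
where `□` and `deg` act in `v` and the `ρ`-derivatives are taken at `(ρ,v)`. -/
theorem stmt2 (μ : ℝ) (hμ : 0 < μ) (F : (Fin 5 → ℝ) → ℝ)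
    (hF : ContDiffOn ℝ (⊤ : ℕ∞) F upperRegion) (ρ : ℝ) (hρ : 0 < ρ) (v : Fin 4 → ℝ) :
    box14 F (Phi μ ρ v) =
      deriv (deriv (fun r => F (Phi μ r v))) ρ
      + (4 / ρ) * deriv (fun r => F (Phi μ r v)) ρ
      - (1 / (μ ^ 2 * ρ ^ 2)) *
          (lap (fun u => F (Phi μ ρ u)) v
            + μ ^ 2 * (degOp (degOp (fun u => F (Phi μ ρ u))) v
                        + 3 * degOp (fun u => F (Phi μ ρ u)) v)) := by
  have hF2 : ContDiffAt ℝ 2 F (hyperbolicMap μ ρ v) :=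
    Phi_eq_hyperbolicMap ▸ contDiffAt_Phi_of_contDiffOn_upperRegion (contDiffOn_infty.1 hF 2) hρ v
  simpa only [Phi_eq_hyperbolicMap, lap_eq_coordLaplacian, degOp_eq_eulerOp, box14_eq_waveOp,
    Nat.cast_ofNat, show (4 : ℝ) - 1 = 3 by norm_num] using stmt2_general hμ.ne' hρ.ne' hF2
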